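/- Let φ : ℕ → ℕ be a map and let (n_k), (m_k) and (t_k) be three φ-increasing sequences of positive integers. There exist strictly increasing sequences (k_{1,s}) and (k_{2,s}) of positive integers and a non-increasing sequence (M_s)_{s≥1} of closed infinite-dimensional linear subspaces of H(ℂ) such that for every b > 0, every θ ∈ (0, π) and every j ≥ 1 there exists a continuous seminorm q on H(ℂ) such that for every a ∈ 𝕋 with a ∉ {e^{iα} : α ∈ (−θ, θ)}, every s ∈ ℕ and every x ∈ M_s: (1) p_j(e^{bk} D^k x) ≤ q(x) for every k ∈ [n_s, n_s + φ(n_s)]; (2) p_j(e^{bk} T_a^k x) ≤ q(x) for every k ∈ [m_{k_{1,s}}, m_{k_{1,s}} + φ(m_{k_{1,s}})]; (3) p_j(e^{bk} T_1^k x) ≤ q(x) for every k ∈ [t_{k_{2,s}}, t_{k_{2,s}} + φ(t_{k_{2,s}})]. -/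

import Mathlib

/-!
The subspaces `M_s` consist of lacunary power series `∑_{l ≥ s} c_l F ^ N_l` in a single
non-constant entire function `F` that is bounded on every half-plane
`{sin σ · Re z + cos σ · Im z ≤ J}` with `0 ≤ σ < π`.

*The function `F`* (`exists_entire`).  Put `lapl z = ∫_ℝ kern z r dr` with
`kern z v = exp (-i e^v (z - v² - i v) + v)`.  On the horizontal line `Im v = σ`, the norm of the
kernel decays fast enough for the contour to be moved from `ℝ` to `ℝ + iσ` whenever `0 ≤ σ < π`
(`lapl_eq_shift`), and on the shifted line it is dominated by an integrable function uniformly for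
`z` in the half-plane (`kern_bound`).  The values `e^n · lapl (-i e^n)` tend to a positive number,
so `lapl` is not constant (`lapl_not_const`).  Take `F = lapl - lapl 0`.

*Bounded orbits.*  The points `z + k a` with `‖z‖ ≤ j`, `k ∈ ℕ` and `a` a unit vector outside the
arc of half-width `θ` all lie in two of these half-planes, `σ = 0` or `σ = π - θ`, and so do the
points `z + k` (`bounded_on_translates`).  Hence `F` is bounded by some `B = B(θ, j)` on all of them.

*Coefficients* (`coeff_big`).  For every `R` the quantity `‖c_l‖ R ^ N_l` is bounded by a
continuous seminorm of `f = ∑ c_l F ^ N_l`, uniformly in `l`.  For small `R` this is Cauchy's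
inequality, as `F` is open at `0`.  For large `R`, Liouville's theorem gives `z₀` with
`‖F z₀‖ > R`; the set `F (ball z₀ 1)` contains only a small disc about `F z₀`, but its rotations by
`d`-th roots of unity cover the circle through `F z₀` once `d` is large, and the powers `w ^ N_l`
with `l ≥ d` do not see these rotations because `d ∣ N_l`.  The estimate shows that the spaces are
closed (`lacSpace_closed`).  Choosing `N_l` larger than `K l` and `(K l)!`, where `K s` bounds
all the indices `k` occurring at stage `s`, it also gives
`(K s)! e^{b K s} ‖f z‖ ≤ C p_i(f)` for `f ∈ M_s` and `‖F z‖ ≤ B` (`lacSpace_estimate`).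
This yields the claims on the translations directly, and the claim on `D ^ k` through Cauchy's
inequality on unit circles.
-/

open Filter Metric Set

noncomputable def pnorm (j : ℝ) (f : ℂ → ℂ) : ℝ :=
  sSup ((fun z => ‖f z‖) '' Metric.closedBall (0 : ℂ) j)

/-- Convergence in `H(ℂ)`, i.e. uniform convergence on every compact subset of `ℂ`. -/
def TendstoH (F : ℕ → ℂ → ℂ) (f : ℂ → ℂ) : Prop :=
  ∀ j : ℕ, 1 ≤ j → Filter.Tendsto (fun k => pnorm j (F k - f)) Filter.atTop (nhds 0)

/-- A set of entire functions is dense in `H(ℂ)`. -/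
def DenseH (S : Set (ℂ → ℂ)) : Prop :=
  ∀ f : ℂ → ℂ, Differentiable ℂ f → ∀ j : ℕ, 1 ≤ j → ∀ ε : ℝ, 0 < ε →
    ∃ g ∈ S, pnorm j (g - f) < ε

/-- A set of entire functions is (sequentially) closed in `H(ℂ)`. -/
def ClosedH (M : Set (ℂ → ℂ)) : Prop :=
  ∀ (F : ℕ → ℂ → ℂ) (f : ℂ → ℂ), (∀ k, F k ∈ M) → Differentiable ℂ f →
    TendstoH F f → f ∈ M

/-- The operator `μ D`, `f ↦ μ f'`. -/
noncomputable def derivOp (μ : ℂ) : (ℂ → ℂ) → ℂ → ℂ := fun f z => μ * deriv f z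

/-- The operator `μ T_a`, `f ↦ μ f(· + a)`. -/
def transOp (μ a : ℂ) : (ℂ → ℂ) → ℂ → ℂ := fun f z => μ * f (z + a)

/-- The translation operator `T_a`, `f ↦ f(· + a)`. -/
def translOp (a : ℂ) : (ℂ → ℂ) → ℂ → ℂ := fun f z => f (z + a)

/-- `f` has dense orbit under `S` in `H(ℂ)`. -/
def HypercyclicFor (S : (ℂ → ℂ) → ℂ → ℂ) (f : ℂ → ℂ) : Prop :=
  ∀ g : ℂ → ℂ, Differentiable ℂ g → ∀ j : ℕ, 1 ≤ j → ∀ ε : ℝ, 0 < ε →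
    ∃ n : ℕ, pnorm j (S^[n] f - g) < ε

/-- `M` is a closed infinite-dimensional subspace of `H(ℂ)`. -/
def IsClosedInfDimSubspaceH (M : Submodule ℂ (ℂ → ℂ)) : Prop :=
  (∀ f ∈ M, Differentiable ℂ f) ∧ ClosedH (M : Set (ℂ → ℂ)) ∧ ¬ FiniteDimensional ℂ M

/-- `a` does not belong to the arc `{e^{iα} : α ∈ (-θ, θ)}` of the unit circle. -/
def OutsideArc (θ : ℝ) (a : ℂ) : Prop :=
  ∀ α : ℝ, -θ < α → α < θ → a ≠ Complex.exp (α * Complex.I)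

/-- A sequence `(n_k)_{k ≥ 1}` of positive integers is `φ`-increasing. -/
def PhiIncreasing (φ : ℕ → ℕ) (n : ℕ → ℕ) : Prop :=
  (∀ k, 1 ≤ k → 1 ≤ n k) ∧ ∀ k, 1 ≤ k → n k + φ (n k) < n (k + 1)

/-- `q` is a continuous seminorm on `H(ℂ)`. -/
def IsContinuousSeminormH (q : (ℂ → ℂ) → ℝ) : Prop :=
  (∀ f g : ℂ → ℂ, Differentiable ℂ f → Differentiable ℂ g → q (f + g) ≤ q f + q g) ∧
  (∀ (c : ℂ) (f : ℂ → ℂ), Differentiable ℂ f → q (c • f) = ‖c‖ * q f) ∧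
  (∃ (C : ℝ) (i : ℕ), 0 < C ∧ 1 ≤ i ∧ ∀ f : ℂ → ℂ, Differentiable ℂ f → q f ≤ C * pnorm i f)

/-- `q` is a continuous norm on `H(ℂ)`. -/
def IsContinuousNormH (q : (ℂ → ℂ) → ℝ) : Prop :=
  IsContinuousSeminormH q ∧ ∀ f : ℂ → ℂ, Differentiable ℂ f → q f = 0 → f = 0

/-! ### An entire function bounded on half-planes -/

/-- The integrand `exp (-i e^v (z - v² - i v) + v)` of the function `lapl`, as a function of
`v ∈ ℂ`. -/
noncomputable def kern (z v : ℂ) : ℂ :=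
  Complex.exp (-Complex.I * Complex.exp v * (z - v ^ 2 - Complex.I * v) + v)

theorem norm_kern (z : ℂ) (r s : ℝ) :
    ‖kern z (r + s * Complex.I)‖ = Real.exp (Real.exp r *
      ((Real.sin s * z.re + Real.cos s * z.im) + Real.sin s * (s ^ 2 + s)
        - Real.sin s * r ^ 2 - Real.cos s * (2 * s + 1) * r) + r) := by
  rw [kern, Complex.norm_exp]
  congr 1
  have h1 : (Complex.exp (r + s * Complex.I)).re = Real.exp r * Real.cos s := by
    simp [Complex.exp_re]
  have h2 : (Complex.exp (r + s * Complex.I)).im = Real.exp r * Real.sin s := by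
    simp [Complex.exp_im]
  simp [h1, h2, pow_two]
  ring

/-- The right-hand side is the part of the exponent of `kern` that forces decay as `r → ∞`.  It grows
at least linearly for every height `s`: by `sin s + cos s ≥ 1` if `s ≤ π / 2`, and through the
quadratic term if `s > π / 2`, where `sin s ≥ sin σ > 0`. -/
theorem trig_lower {σ s : ℝ} (hσ : σ < Real.pi) (hs : 0 ≤ s) (hsσ : s ≤ σ) {r : ℝ} (hr : 0 ≤ r) :
    r - (1 + 25 / Real.sin σ) ≤ Real.sin s * r ^ 2 + Real.cos s * (2 * s + 1) * r := by
  have hπ : Real.pi ≤ 3.15 := Real.pi_lt_d2.le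
  have hsin : 0 ≤ Real.sin s := Real.sin_nonneg_of_nonneg_of_le_pi hs (by linarith)
  have hsσ' : 0 ≤ Real.sin σ := Real.sin_nonneg_of_nonneg_of_le_pi (by linarith) (by linarith)
  have hK : 0 ≤ 25 / Real.sin σ := by positivity
  rcases le_or_gt s (Real.pi / 2) with h | h
  · have hcos : 0 ≤ Real.cos s := Real.cos_nonneg_of_neg_pi_div_two_le_of_le (by linarith) h
    have hsc : 1 ≤ Real.sin s + Real.cos s := by
      nlinarith [Real.sin_sq_add_cos_sq s, mul_nonneg hsin hcos]
    have e1 : Real.cos s * r ≤ Real.cos s * (2 * s + 1) * r := by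
      nlinarith [mul_nonneg (mul_nonneg hcos hs) hr]
    rcases le_or_gt 1 r with h1 | h1
    · have : Real.sin s * r ≤ Real.sin s * r ^ 2 := by
        apply mul_le_mul_of_nonneg_left _ hsin; nlinarith
      nlinarith
    · have := mul_nonneg hcos hr
      have := mul_nonneg hsin (sq_nonneg r)
      linarith
  · have hpos : 0 < Real.sin σ := Real.sin_pos_of_pos_of_lt_pi (by linarith) hσ
    have hmono : Real.sin σ ≤ Real.sin s := by
      rw [← Real.sin_pi_sub σ, ← Real.sin_pi_sub s]
      apply Real.sin_le_sin_of_le_of_le_pi_div_two <;> linarith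
    have e1 : -(8 * r) ≤ Real.cos s * (2 * s + 1) * r := by
      have : -8 ≤ Real.cos s * (2 * s + 1) := by nlinarith [Real.neg_one_le_cos s]
      nlinarith
    have e2 : Real.sin σ * r ^ 2 ≤ Real.sin s * r ^ 2 :=
      mul_le_mul_of_nonneg_right hmono (sq_nonneg r)
    have e3 : 9 * r ≤ Real.sin σ * r ^ 2 + 25 / Real.sin σ := by
      have : Real.sin σ * r ^ 2 + 25 / Real.sin σ - 9 * r =
        ((Real.sin σ * r - 9 / 2) ^ 2 + 25 - 81 / 4) / Real.sin σ := by
        field_simp; ring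
      have h2 : 0 ≤ ((Real.sin σ * r - 9 / 2) ^ 2 + 25 - 81 / 4) / Real.sin σ := by
        apply div_nonneg _ hpos.le
        nlinarith [sq_nonneg (Real.sin σ * r - 9 / 2)]
      linarith
    linarith

/-- On the lines `Im v = s` with `0 ≤ s ≤ σ < π`, the kernel is dominated by one integrable function,
uniformly over the half-plane attached to `s`. -/
theorem kern_bound {σ : ℝ} (hσ : σ < Real.pi) (J : ℝ) :
    ∃ C : ℝ, 0 ≤ C ∧ ∀ s : ℝ, 0 ≤ s → s ≤ σ → ∀ z : ℂ,
      Real.sin s * z.re + Real.cos s * z.im ≤ J → ∀ r : ℝ,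
        ‖kern z (r + s * Complex.I)‖ ≤ C * Real.exp (-r - 2 * |r|) := by
  obtain ⟨K, hK0, hK1, hK⟩ : ∃ K : ℝ, 0 ≤ K ∧ |J| + 20 ≤ K ∧ |J| + 20 + (1 + 25 / Real.sin σ) ≤ K :=
    ⟨max 0 (max (|J| + 20) (|J| + 20 + (1 + 25 / Real.sin σ))), le_max_left _ _,
      (le_max_left _ _).trans (le_max_right _ _), (le_max_right _ _).trans (le_max_right _ _)⟩
  refine ⟨Real.exp (K + 8 + Real.exp (K + 4) * K + 4 * (K + 4)), by positivity, ?_⟩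
  intro s hs hsσ z hz r
  have hπ : Real.pi ≤ 3.15 := Real.pi_lt_d2.le
  have hsin : 0 ≤ Real.sin s := Real.sin_nonneg_of_nonneg_of_le_pi hs (by linarith)
  rw [norm_kern, ← Real.exp_add, Real.exp_le_exp]
  have hJ := le_abs_self J
  have hc : Real.sin s * (s ^ 2 + s) ≤ 20 := by
    have h1 : s ^ 2 + s ≤ 20 := by nlinarith
    nlinarith [Real.sin_le_one s, sq_nonneg s]
  have hEK : 0 ≤ Real.exp (K + 4) * K := by positivity
  rcases le_or_gt 0 r with h | h
  · rw [abs_of_nonneg h]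
    have ht := trig_lower hσ hs hsσ h
    set A := (Real.sin s * z.re + Real.cos s * z.im) + Real.sin s * (s ^ 2 + s)
        - Real.sin s * r ^ 2 - Real.cos s * (2 * s + 1) * r with hA
    have hA' : A ≤ K - r := by rw [hA]; linarith
    have h1 : Real.exp r * A ≤ Real.exp r * (K - r) :=
      mul_le_mul_of_nonneg_left hA' (Real.exp_pos r).le
    have h2 := Real.add_one_le_exp r
    rcases le_or_gt (K + 4) r with h3 | h3
    · have : Real.exp r * (K - r) ≤ Real.exp r * (-4) :=
        mul_le_mul_of_nonneg_left (by linarith) (Real.exp_pos r).le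
      linarith
    · have : Real.exp r * (K - r) ≤ Real.exp (K + 4) * K := by
        have := Real.exp_le_exp.2 h3.le
        have h5 := Real.exp_pos r
        nlinarith
      linarith
  · rw [abs_of_neg h]
    set A := (Real.sin s * z.re + Real.cos s * z.im) + Real.sin s * (s ^ 2 + s)
        - Real.sin s * r ^ 2 - Real.cos s * (2 * s + 1) * r with hA
    have h8 : Real.cos s * (2 * s + 1) ≤ 8 := by nlinarith [Real.cos_le_one s]
    have hA' : A ≤ K + 8 * (-r) := by
      rw [hA]; nlinarith [mul_nonneg hsin (sq_nonneg r)]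
    have h1 : Real.exp r * A ≤ Real.exp r * (K + 8 * (-r)) :=
      mul_le_mul_of_nonneg_left hA' (Real.exp_pos r).le
    have h2 : Real.exp r ≤ 1 := Real.exp_le_one_iff.2 h.le
    have h3 : Real.exp r * (-r) ≤ 1 := by
      have e1 := Real.add_one_le_exp (-r)
      have e2 : Real.exp r * Real.exp (-r) = 1 := by rw [← Real.exp_add]; simp
      have e3 := Real.exp_pos r
      nlinarith
    nlinarith

theorem integrable_exp_neg_abs' : MeasureTheory.Integrable (fun r : ℝ => Real.exp (-|r|)) := by
  refine (integrable_inv_one_add_sq.const_mul 2).mono' (by fun_prop) (.of_forall fun r => ?_)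
  rw [Real.norm_eq_abs, abs_of_pos (Real.exp_pos _), Real.exp_neg, ← div_eq_mul_inv,
    inv_eq_one_div, div_le_div_iff₀ (Real.exp_pos _) (by positivity)]
  have := Real.quadratic_le_exp_of_nonneg (abs_nonneg r)
  rw [sq_abs] at this
  linarith [abs_nonneg r]

theorem differentiable_kern (z : ℂ) : Differentiable ℂ (kern z) := by
  unfold kern; fun_prop

theorem continuous_kern_line (z : ℂ) (s : ℝ) :
    Continuous (fun r : ℝ => kern z (r + s * Complex.I)) :=
  (differentiable_kern z).continuous.comp (by fun_prop)

theorem exp_decay_le (r : ℝ) : Real.exp (-r - 2 * |r|) ≤ Real.exp (-|r|) := by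
  rw [Real.exp_le_exp]; linarith [neg_abs_le r]

theorem integrable_kern {s : ℝ} (hs : 0 ≤ s) (hs' : s < Real.pi) (z : ℂ) :
    MeasureTheory.Integrable (fun r : ℝ => kern z (r + s * Complex.I)) := by
  obtain ⟨C, hC, h⟩ := kern_bound hs' (Real.sin s * z.re + Real.cos s * z.im)
  refine (integrable_exp_neg_abs'.const_mul C).mono'
    (continuous_kern_line z s).aestronglyMeasurable (.of_forall fun r => ?_)
  exact (h s hs le_rfl z le_rfl r).trans (mul_le_mul_of_nonneg_left (exp_decay_le r) hC)

/-- The integral of `kern z` over the real line, an entire function of `z`. -/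
noncomputable def lapl (z : ℂ) : ℂ := ∫ r : ℝ, kern z r

/-- Cauchy's theorem on long rectangles: the contour may be moved to height `σ`. -/
theorem lapl_eq_shift {σ : ℝ} (hσ0 : 0 ≤ σ) (hσ : σ < Real.pi) (z : ℂ) :
    lapl z = ∫ r : ℝ, kern z (r + σ * Complex.I) := by
  obtain ⟨C, hC, hb⟩ := kern_bound hσ (|z.re| + |z.im|)
  have hb' : ∀ s : ℝ, 0 ≤ s → s ≤ σ → ∀ r : ℝ,
      ‖kern z (r + s * Complex.I)‖ ≤ C * Real.exp (-|r|) := by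
    intro s hs hsσ r
    refine (hb s hs hsσ z ?_ r).trans (mul_le_mul_of_nonneg_left (exp_decay_le r) hC)
    have h1 : Real.sin s * z.re ≤ |z.re| := by
      calc _ ≤ |Real.sin s * z.re| := le_abs_self _
        _ = |Real.sin s| * |z.re| := abs_mul _ _
        _ ≤ 1 * |z.re| := mul_le_mul_of_nonneg_right (Real.abs_sin_le_one s) (abs_nonneg _)
        _ = _ := one_mul _
    have h2 : Real.cos s * z.im ≤ |z.im| := by
      calc _ ≤ |Real.cos s * z.im| := le_abs_self _
        _ = |Real.cos s| * |z.im| := abs_mul _ _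
        _ ≤ 1 * |z.im| := mul_le_mul_of_nonneg_right (Real.abs_cos_le_one s) (abs_nonneg _)
        _ = _ := one_mul _
    linarith
  have hside : ∀ u : ℕ → ℝ, Tendsto (fun n => |u n|) atTop atTop →
      Tendsto (fun n => Complex.I • ∫ y : ℝ in (0 : ℝ)..σ, kern z (u n + y * Complex.I))
        atTop (nhds 0) := by
    intro u hu
    have h0 : Tendsto (fun n => C * Real.exp (-|u n|) * |σ - 0|) atTop (nhds 0) := by
      have := (Real.tendsto_exp_neg_atTop_nhds_zero.comp hu).const_mul C |>.mul_const |σ - 0|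
      simpa using this
    refine squeeze_zero_norm (fun n => ?_) h0
    rw [norm_smul, Complex.norm_I, one_mul]
    refine intervalIntegral.norm_integral_le_of_norm_le_const fun y hy => ?_
    rw [uIoc_of_le hσ0] at hy
    exact hb' y hy.1.le hy.2 _
  have hn : Tendsto (fun n : ℕ => (n : ℝ)) atTop atTop := tendsto_natCast_atTop_atTop
  have hneg : Tendsto (fun n : ℕ => -(n : ℝ)) atTop atBot := tendsto_neg_atTop_atBot.comp hn
  have hi0 : MeasureTheory.Integrable (fun r : ℝ => kern z r) := by
    simpa using integrable_kern le_rfl Real.pi_pos z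
  have t0 := MeasureTheory.intervalIntegral_tendsto_integral hi0 hneg hn
  have t1 := MeasureTheory.intervalIntegral_tendsto_integral (integrable_kern hσ0 hσ z) hneg hn
  have t2 := hside (fun n : ℕ => (n : ℝ)) (by simpa using hn)
  have t3 := hside (fun n : ℕ => -(n : ℝ)) (by simpa using hn)
  -- the integrals over the vertical sides of the rectangles vanish in the limit
  have hrect : ∀ n : ℕ, (((∫ r : ℝ in (-(n : ℝ))..n, kern z r)
      - ∫ r : ℝ in (-(n : ℝ))..n, kern z (r + σ * Complex.I))
      + Complex.I • ∫ y : ℝ in (0 : ℝ)..σ, kern z (((n : ℝ) : ℂ) + y * Complex.I))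
      - Complex.I • ∫ y : ℝ in (0 : ℝ)..σ, kern z (((-(n : ℝ) : ℝ) : ℂ) + y * Complex.I) = 0 := by
    intro n
    have := Complex.integral_boundary_rect_eq_zero_of_differentiableOn (kern z)
      (⟨-(n : ℝ), 0⟩ : ℂ) (⟨n, σ⟩ : ℂ) (differentiable_kern z).differentiableOn
    simpa using this
  have tl := ((t0.sub t1).add t2).sub t3
  have hz : (fun n : ℕ => (((∫ r : ℝ in (-(n : ℝ))..n, kern z r)
      - ∫ r : ℝ in (-(n : ℝ))..n, kern z (r + σ * Complex.I))
      + Complex.I • ∫ y : ℝ in (0 : ℝ)..σ, kern z (((n : ℝ) : ℂ) + y * Complex.I))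
      - Complex.I • ∫ y : ℝ in (0 : ℝ)..σ, kern z (((-(n : ℝ) : ℝ) : ℂ) + y * Complex.I))
      = fun _ => 0 := funext hrect
  have := tendsto_nhds_unique (hz ▸ tl) tendsto_const_nhds
  simpa [sub_eq_zero, lapl] using this

/-- On the shifted contour the kernel has an integrable bound uniform over the half-plane. -/
theorem lapl_bounded {σ : ℝ} (hσ0 : 0 ≤ σ) (hσ : σ < Real.pi) (J : ℝ) :
    ∃ B : ℝ, ∀ z : ℂ, Real.sin σ * z.re + Real.cos σ * z.im ≤ J → ‖lapl z‖ ≤ B := by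
  obtain ⟨C, hC, hb⟩ := kern_bound hσ J
  refine ⟨∫ r : ℝ, C * Real.exp (-|r|), fun z hz => ?_⟩
  rw [lapl_eq_shift hσ0 hσ]
  refine MeasureTheory.norm_integral_le_of_norm_le (integrable_exp_neg_abs'.const_mul C)
    (.of_forall fun r => ?_)
  exact (hb σ hσ0 le_rfl z hz r).trans (mul_le_mul_of_nonneg_left (exp_decay_le r) hC)

theorem differentiable_lapl : Differentiable ℂ lapl := by
  intro z₀
  obtain ⟨C, hC, hb⟩ := kern_bound Real.pi_pos (z₀.im + 1)
  have key := hasDerivAt_integral_of_dominated_loc_of_deriv_le (𝕜 := ℂ) (x₀ := z₀)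
    (μ := MeasureTheory.volume)
    (F := fun z (r : ℝ) => kern z r) (s := Metric.ball z₀ 1)
    (F' := fun z (r : ℝ) => kern z r * (-Complex.I * Complex.exp r))
    (bound := fun r => C * Real.exp (-|r|)) (Metric.ball_mem_nhds _ one_pos)
    (.of_forall fun z => by
      simpa using (continuous_kern_line z 0).aestronglyMeasurable)
    (by simpa using integrable_kern le_rfl Real.pi_pos z₀)
    (by
      have := continuous_kern_line z₀ 0
      simp only [Complex.ofReal_zero, zero_mul, add_zero] at this
      exact (this.mul (by fun_prop)).aestronglyMeasurable)
    (.of_forall fun r z hz => by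
      have h1 : z.im ≤ z₀.im + 1 := by
        have h2 := Complex.abs_im_le_norm (z - z₀)
        rw [Metric.mem_ball, dist_eq_norm] at hz
        rw [Complex.sub_im] at h2
        linarith [le_abs_self (z.im - z₀.im)]
      have h2 := hb 0 le_rfl le_rfl z (by simpa using h1) r
      simp only [Complex.ofReal_zero, zero_mul, add_zero] at h2
      have h3 : ‖-Complex.I * Complex.exp r‖ = Real.exp r := by
        rw [norm_mul, norm_neg, Complex.norm_I, one_mul, Complex.norm_exp, Complex.ofReal_re]
      rw [norm_mul, h3]
      calc _ ≤ C * Real.exp (-r - 2 * |r|) * Real.exp r :=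
            mul_le_mul_of_nonneg_right h2 (Real.exp_pos _).le
        _ = C * Real.exp (-(2 * |r|)) := by rw [mul_assoc, ← Real.exp_add]; ring_nf
        _ ≤ _ := mul_le_mul_of_nonneg_left
            (Real.exp_le_exp.2 (by linarith [abs_nonneg r])) hC)
    (integrable_exp_neg_abs'.const_mul C)
    (.of_forall fun r z _ => by
      unfold kern
      have h1 : HasDerivAt (fun z : ℂ => -Complex.I * Complex.exp r * (z - (r : ℂ) ^ 2 - Complex.I * r)
          + r) (-Complex.I * Complex.exp r * 1) z :=
        (((hasDerivAt_id z).sub_const _).sub_const _).const_mul _ |>.add_const _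
      simpa using h1.cexp)
  exact key.2.differentiableAt

/-- The substitution `r ↦ r - n` isolates the limiting integrand `exp (-e^r) e^r`. -/
theorem exp_n_mul_lapl (n : ℕ) :
    (Real.exp n : ℂ) * lapl (-Complex.I * Real.exp n) = ∫ r : ℝ,
      Complex.exp (-Complex.exp r) * Complex.exp (r) *
      Complex.exp (Complex.I * Complex.exp ((r - n : ℝ) : ℂ) *
        (((r - n : ℝ) : ℂ) ^ 2 + Complex.I * ((r - n : ℝ) : ℂ))) := by
  rw [lapl, ← MeasureTheory.integral_sub_right_eq_self _ (n : ℝ), ← MeasureTheory.integral_const_mul]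
  congr 1
  ext r
  rw [kern, Complex.ofReal_exp, ← Complex.exp_add, ← Complex.exp_add, ← Complex.exp_add]
  congr 1
  have : Complex.exp ((r - n : ℝ) : ℂ) * Complex.exp ((n : ℝ) : ℂ) = Complex.exp r := by
    rw [← Complex.exp_add]; congr 1; push_cast; ring
  rw [← this]
  push_cast
  linear_combination (Complex.exp ((r:ℂ) - n) * Complex.exp (n:ℂ)) * Complex.I_mul_I

theorem mul_exp_ge_neg_one (u : ℝ) : -(Real.exp u * u) ≤ 1 := by
  have e1 := Real.add_one_le_exp (-u)
  have e2 : Real.exp u * Real.exp (-u) = 1 := by rw [← Real.exp_add]; simp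
  have e3 := Real.exp_pos u
  nlinarith

/-- If `lapl` were a constant `κ`, then `e^n κ` would converge to `∫ exp (-e^r) e^r dr > 0` by
dominated convergence, which is impossible for every value of `κ`. -/
theorem lapl_not_const (κ : ℂ) (h : ∀ z, lapl z = κ) : False := by
  have hdct : Tendsto (fun n : ℕ => (Real.exp n : ℂ) * lapl (-Complex.I * Real.exp n)) atTop
      (nhds (∫ r : ℝ, ((Real.exp (-Real.exp r) * Real.exp r : ℝ) : ℂ))) := by
    simp_rw [exp_n_mul_lapl]
    refine MeasureTheory.tendsto_integral_of_dominated_convergence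
      (fun r => Real.exp 1 * Real.exp (-|r|)) (fun n => Continuous.aestronglyMeasurable (by fun_prop))
      (integrable_exp_neg_abs'.const_mul _) (fun n => .of_forall fun r => ?_)
      (.of_forall fun r => ?_)
    · rw [← Complex.exp_add, ← Complex.exp_add, Complex.norm_exp, ← Real.exp_add, Real.exp_le_exp]
      have h1 : (Complex.exp (r : ℂ)).re = Real.exp r := Complex.exp_ofReal_re r
      have h2 : (Complex.I * Complex.exp ((r - n : ℝ) : ℂ) *
        (((r - n : ℝ) : ℂ) ^ 2 + Complex.I * ((r - n : ℝ) : ℂ))).re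
          = -(Real.exp (r - n) * (r - n)) := by
        rw [← Complex.ofReal_exp]
        set a := r - n
        set b := Real.exp a
        simp [pow_two]
      rw [Complex.add_re, Complex.add_re, h2, Complex.neg_re, h1, Complex.ofReal_re]
      have h3 := mul_exp_ge_neg_one (r - n)
      have h4 : -Real.exp r + r ≤ -|r| := by
        rcases le_or_gt 0 r with hr | hr
        · rw [abs_of_nonneg hr]
          have := Real.quadratic_le_exp_of_nonneg hr
          nlinarith [sq_nonneg (r - 1)]
        · rw [abs_of_neg hr]
          linarith [Real.exp_pos r]
      linarith
    · have hg : Tendsto (fun n : ℕ => r - (n : ℝ)) atTop atBot :=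
        tendsto_atBot_add_const_left _ _ (tendsto_neg_atTop_atBot.comp tendsto_natCast_atTop_atTop)
      have e0 : Tendsto (fun n : ℕ => Real.exp (r - n)) atTop (nhds 0) :=
        Real.tendsto_exp_atBot.comp hg
      have e1 : Tendsto (fun n : ℕ => Real.exp (r - n) * (r - n)) atTop (nhds 0) := by
        have := (Real.tendsto_pow_mul_exp_neg_atTop_nhds_zero 1).comp (tendsto_neg_atBot_atTop.comp hg)
        have := this.neg
        simp only [Function.comp_def, pow_one, neg_neg, neg_zero] at this
        refine this.congr fun n => by ring
      have e2 : Tendsto (fun n : ℕ => Real.exp (r - n) * (r - n) ^ 2) atTop (nhds 0) := by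
        have := (Real.tendsto_pow_mul_exp_neg_atTop_nhds_zero 2).comp (tendsto_neg_atBot_atTop.comp hg)
        simp only [Function.comp_def, neg_neg] at this
        refine this.congr fun n => by ring
      have e1' := (Complex.continuous_ofReal.tendsto _).comp e1
      have e2' := (Complex.continuous_ofReal.tendsto _).comp e2
      have e3 : Tendsto (fun n : ℕ => Complex.I * Complex.exp ((r - n : ℝ) : ℂ) *
        (((r - n : ℝ) : ℂ) ^ 2 + Complex.I * ((r - n : ℝ) : ℂ))) atTop (nhds 0) := by
        have := (e2'.const_mul Complex.I).sub e1'
        simp only [Complex.ofReal_zero, mul_zero, sub_zero] at this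
        refine this.congr fun n => ?_
        simp only [Function.comp_def]
        push_cast
        linear_combination (-Complex.exp ((r:ℂ) - n) * ((r : ℂ) - n)) * Complex.I_mul_I
      have := ((Complex.continuous_exp.tendsto 0).comp e3).const_mul
        (Complex.exp (-Complex.exp r) * Complex.exp (r))
      simpa [Function.comp_def] using this
  rw [integral_complex_ofReal] at hdct
  set I₀ := ∫ r : ℝ, Real.exp (-Real.exp r) * Real.exp r
  have hpos : 0 < I₀ := by
    refine MeasureTheory.integral_pos_of_integrable_nonneg_nonzero (x := 0) (by fun_prop) ?_
      (fun r => by positivity) (by positivity)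
    refine integrable_exp_neg_abs'.mono' (by fun_prop) (.of_forall fun r => ?_)
    rw [Real.norm_eq_abs, abs_of_pos (by positivity), ← Real.exp_add, Real.exp_le_exp]
    rcases le_or_gt 0 r with hr | hr
    · rw [abs_of_nonneg hr]
      have := Real.quadratic_le_exp_of_nonneg hr
      nlinarith [sq_nonneg (r - 1)]
    · rw [abs_of_neg hr]
      linarith [Real.exp_pos r]
  -- a convergent sequence `e^n κ` forces `κ = 0`, so that its limit `I₀` would be `0`
  simp_rw [h] at hdct
  have hinv : Tendsto (fun n : ℕ => (Real.exp (-(n : ℝ)) : ℂ)) atTop (nhds 0) := by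
    have := (Complex.continuous_ofReal.tendsto _).comp
      (Real.tendsto_exp_neg_atTop_nhds_zero.comp (tendsto_natCast_atTop_atTop (R := ℝ)))
    simpa [Function.comp_def] using this
  have hκ : κ = 0 := by
    have := hinv.mul hdct
    rw [zero_mul] at this
    refine tendsto_nhds_unique (tendsto_const_nhds.congr fun n : ℕ => ?_) this
    rw [← mul_assoc, ← Complex.ofReal_mul, ← Real.exp_add]; simp
  rw [hκ] at hdct
  simp only [mul_zero] at hdct
  have := tendsto_nhds_unique hdct tendsto_const_nhds
  exact hpos.ne' (by exact_mod_cast this)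

theorem exists_entire :
    ∃ F : ℂ → ℂ, Differentiable ℂ F ∧ F 0 = 0 ∧ (∃ z, F z ≠ 0) ∧
      ∀ σ : ℝ, 0 ≤ σ → σ < Real.pi → ∀ J : ℝ, ∃ B : ℝ, ∀ z : ℂ,
        Real.sin σ * z.re + Real.cos σ * z.im ≤ J → ‖F z‖ ≤ B := by
  refine ⟨fun z => lapl z - lapl 0, differentiable_lapl.sub_const _, sub_self _, ?_, ?_⟩
  · by_contra! h
    exact lapl_not_const (lapl 0) fun z => sub_eq_zero.1 (h z)
  · intro σ h0 h1 J
    obtain ⟨B, hB⟩ := lapl_bounded h0 h1 J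
    exact ⟨B + ‖lapl 0‖, fun z hz => (norm_sub_le _ _).trans (by linarith [hB z hz])⟩

/-! ### The norms `pnorm j` -/

theorem pnorm_nonneg (j : ℝ) (f : ℂ → ℂ) : 0 ≤ pnorm j f := by
  refine Real.sSup_nonneg ?_
  rintro _ ⟨z, _, rfl⟩
  exact norm_nonneg _

theorem pnorm_le {j C : ℝ} {f : ℂ → ℂ} (hC : 0 ≤ C) (h : ∀ z, ‖z‖ ≤ j → ‖f z‖ ≤ C) :
    pnorm j f ≤ C := by
  refine Real.sSup_le ?_ hC
  rintro _ ⟨z, hz, rfl⟩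
  exact h z (by simpa using hz)

theorem le_pnorm {j : ℝ} {f : ℂ → ℂ} (hf : Continuous f) {z : ℂ} (hz : ‖z‖ ≤ j) :
    ‖f z‖ ≤ pnorm j f := by
  refine le_csSup ?_ ⟨z, by simpa using hz, rfl⟩
  exact (isCompact_closedBall (0 : ℂ) j).bddAbove_image hf.norm.continuousOn

theorem pnorm_mono {i j : ℝ} (hij : i ≤ j) {f : ℂ → ℂ} (hf : Continuous f) :
    pnorm i f ≤ pnorm j f :=
  pnorm_le (pnorm_nonneg _ _) fun _ hz => le_pnorm hf (hz.trans hij)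

theorem isContinuousSeminormH_mul_pnorm {C : ℝ} (hC : 0 < C) {i : ℕ} (hi : 1 ≤ i) :
    IsContinuousSeminormH (fun f => C * pnorm i f) := by
  refine ⟨fun f g hf hg => ?_, fun c f hf => ?_, C, i, hC, hi, fun f _ => le_rfl⟩
  · rw [← mul_add]
    refine mul_le_mul_of_nonneg_left ?_ hC.le
    refine pnorm_le (add_nonneg (pnorm_nonneg _ _) (pnorm_nonneg _ _)) fun z hz => ?_
    exact (norm_add_le _ _).trans (add_le_add (le_pnorm hf.continuous hz) (le_pnorm hg.continuous hz))
  · have h1 : ∀ (c : ℂ) (f : ℂ → ℂ), Differentiable ℂ f → pnorm i (c • f) ≤ ‖c‖ * pnorm i f := by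
      intro c f hf
      refine pnorm_le (mul_nonneg (norm_nonneg _) (pnorm_nonneg _ _)) fun z hz => ?_
      rw [Pi.smul_apply, norm_smul]
      exact mul_le_mul_of_nonneg_left (le_pnorm hf.continuous hz) (norm_nonneg _)
    have h2 : pnorm i (c • f) = ‖c‖ * pnorm i f := by
      refine le_antisymm (h1 c f hf) ?_
      rcases eq_or_ne c 0 with rfl | hc
      · simpa using pnorm_nonneg _ _
      · have := h1 c⁻¹ (c • f) (hf.const_smul c)
        rw [inv_smul_smul₀ hc, norm_inv] at this
        have hc' : 0 < ‖c‖ := norm_pos_iff.2 hc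
        calc ‖c‖ * pnorm i f ≤ ‖c‖ * (‖c‖⁻¹ * pnorm i (c • f)) :=
              mul_le_mul_of_nonneg_left this hc'.le
          _ = _ := by field_simp
    simp only [h2]; ring

/-! ### Lacunary series in an entire function -/

/-- `∑ c_l w ^ N_l` is an entire function of `w`: the series converges absolutely for every `w`. -/
def EntireCoeff (N : ℕ → ℕ) (c : ℕ → ℂ) : Prop :=
  ∀ R : ℝ, 0 ≤ R → Summable fun l => ‖c l‖ * R ^ N l

/-- The series `∑ c_l F ^ N_l`.  The value is meaningful when `EntireCoeff N c` holds. -/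
noncomputable def lacSum (F : ℂ → ℂ) (N : ℕ → ℕ) (c : ℕ → ℂ) : ℂ → ℂ :=
  fun z => ∑' l, c l * F z ^ N l

theorem EntireCoeff.of_le {N : ℕ → ℕ} {c d : ℕ → ℂ} (hc : EntireCoeff N c)
    (h : ∀ l, ‖d l‖ ≤ ‖c l‖) : EntireCoeff N d := fun R hR =>
  (hc R hR).of_nonneg_of_le (fun l => by positivity)
    fun l => mul_le_mul_of_nonneg_right (h l) (by positivity)

theorem EntireCoeff.summable {N : ℕ → ℕ} {c : ℕ → ℂ} (hc : EntireCoeff N c) (w : ℂ) :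
    Summable fun l => c l * w ^ N l := by
  refine Summable.of_norm ?_
  simpa [norm_mul, norm_pow] using hc ‖w‖ (norm_nonneg w)

theorem EntireCoeff.add {N : ℕ → ℕ} {c d : ℕ → ℂ} (hc : EntireCoeff N c) (hd : EntireCoeff N d) :
    EntireCoeff N (c + d) := fun R hR =>
  ((hc R hR).add (hd R hR)).of_nonneg_of_le (fun l => by positivity) fun l => by
    rw [← add_mul]
    exact mul_le_mul_of_nonneg_right (norm_add_le _ _) (by positivity)

theorem EntireCoeff.smul {N : ℕ → ℕ} {c : ℕ → ℂ} (hc : EntireCoeff N c) (a : ℂ) :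
    EntireCoeff N (a • c) := fun R hR => by
  simpa [norm_mul, mul_assoc] using (hc R hR).mul_left ‖a‖

theorem EntireCoeff.sub {N : ℕ → ℕ} {c d : ℕ → ℂ} (hc : EntireCoeff N c) (hd : EntireCoeff N d) :
    EntireCoeff N (c - d) := by
  simpa [sub_eq_add_neg] using hc.add (hd.smul (-1))

theorem lacSum_add (F : ℂ → ℂ) {N : ℕ → ℕ} {c d : ℕ → ℂ} (hc : EntireCoeff N c)
    (hd : EntireCoeff N d) : lacSum F N (c + d) = lacSum F N c + lacSum F N d := by
  ext z
  simp only [lacSum, Pi.add_apply, add_mul]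
  exact (hc.summable _).tsum_add (hd.summable _)

theorem lacSum_smul (F : ℂ → ℂ) (N : ℕ → ℕ) (c : ℕ → ℂ) (a : ℂ) :
    lacSum F N (a • c) = a • lacSum F N c := by
  ext z
  simp only [lacSum, Pi.smul_apply, smul_eq_mul, mul_assoc]
  exact tsum_mul_left

theorem lacSum_sub (F : ℂ → ℂ) {N : ℕ → ℕ} {c d : ℕ → ℂ} (hc : EntireCoeff N c)
    (hd : EntireCoeff N d) : lacSum F N (c - d) = lacSum F N c - lacSum F N d := by
  ext z
  simp only [lacSum, Pi.sub_apply, sub_mul]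
  exact (hc.summable _).tsum_sub (hd.summable _)

/-- The space of all `∑_{l ≥ s} c_l F ^ N_l` with `∑ c_l w ^ N_l` entire. -/
noncomputable def lacSpace (F : ℂ → ℂ) (N : ℕ → ℕ) (s : ℕ) : Submodule ℂ (ℂ → ℂ) where
  carrier := {f | ∃ c, EntireCoeff N c ∧ (∀ l < s, c l = 0) ∧ f = lacSum F N c}
  zero_mem' := ⟨0, fun R _ => by simp, fun _ _ => rfl, by
    ext z; simp [lacSum]⟩
  add_mem' := by
    rintro _ _ ⟨c, hc, hc0, rfl⟩ ⟨d, hd, hd0, rfl⟩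
    exact ⟨c + d, hc.add hd, fun l hl => by simp [hc0 l hl, hd0 l hl], (lacSum_add F hc hd).symm⟩
  smul_mem' := by
    rintro a _ ⟨c, hc, hc0, rfl⟩
    exact ⟨a • c, hc.smul a, fun l hl => by simp [hc0 l hl], (lacSum_smul F N c a).symm⟩

theorem lacSpace_anti (F : ℂ → ℂ) (N : ℕ → ℕ) {s t : ℕ} (h : s ≤ t) :
    lacSpace F N t ≤ lacSpace F N s := by
  rintro _ ⟨c, hc, hc0, rfl⟩
  exact ⟨c, hc, fun l hl => hc0 l (hl.trans_le h), rfl⟩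

theorem differentiable_lacSum {F : ℂ → ℂ} (hF : Differentiable ℂ F) {N : ℕ → ℕ} {c : ℕ → ℂ}
    (hc : EntireCoeff N c) : Differentiable ℂ (lacSum F N c) := by
  intro z
  have hz : IsOpen (F ⁻¹' ball 0 (‖F z‖ + 1)) := isOpen_ball.preimage hF.continuous
  have := Complex.differentiableOn_tsum_of_summable_norm (U := F ⁻¹' ball 0 (‖F z‖ + 1))
    (F := fun l z => c l * F z ^ N l) (hc (‖F z‖ + 1) (by positivity))
    (fun l => ((hF.pow _).const_mul _).differentiableOn) hz
    (fun l w hw => by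
      rw [norm_mul, norm_pow]
      have : ‖F w‖ ≤ ‖F z‖ + 1 := by
        have : F w ∈ ball (0 : ℂ) (‖F z‖ + 1) := hw
        simpa using (mem_ball_zero_iff.1 this).le
      gcongr)
  exact (this.differentiableAt (hz.mem_nhds (by simp)))

/-! ### Coefficient estimates -/

/-- Cauchy's inequality for the coefficients of `∑ c_l w ^ N_l` on the circle `‖w‖ = r`, obtained by
integrating against `exp (-i N_l θ)`. -/
theorem coeff_le {N : ℕ → ℕ} (hN : Function.Injective N) {c : ℕ → ℂ} {r B : ℝ} (hr : 0 ≤ r)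
    (hs : Summable fun l => ‖c l‖ * r ^ N l)
    (hB : ∀ w : ℂ, ‖w‖ = r → ‖∑' l, c l * w ^ N l‖ ≤ B) (l : ℕ) : ‖c l‖ * r ^ N l ≤ B := by
  let f : ℕ → C(ℝ, ℂ) := fun i =>
    ⟨fun θ => c i * (r * Complex.exp (θ * Complex.I)) ^ N i * Complex.exp (-(N l) * θ * Complex.I),
      by fun_prop⟩
  have hnorm : ∀ i θ, ‖f i θ‖ = ‖c i‖ * r ^ N i := by
    intro i θ
    have h1 : ‖Complex.exp (-(N l) * θ * Complex.I)‖ = 1 := by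
      have := Complex.norm_exp_ofReal_mul_I (-(N l) * θ)
      push_cast at this; exact this
    simp only [f, ContinuousMap.coe_mk, norm_mul, norm_pow, Complex.norm_exp_ofReal_mul_I, h1,
      Complex.norm_real, Real.norm_eq_abs, abs_of_nonneg hr, mul_one]
  have hint := intervalIntegral.hasSum_intervalIntegral_of_summable_norm (a := 0)
    (b := 2 * Real.pi) (f := f) (hs.of_nonneg_of_le (fun _ => norm_nonneg _) fun i => by
      refine (ContinuousMap.norm_le _ (by positivity)).2 fun θ => ?_
      exact (hnorm i θ).le)
  have hi : ∀ i, ∫ θ in (0 : ℝ)..(2 * Real.pi), f i θ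
      = if i = l then 2 * Real.pi * (c l * r ^ N l) else 0 := by
    intro i
    have hf : ∀ θ : ℝ, f i θ = c i * r ^ N i *
        Complex.exp ((((N i : ℤ) - N l : ℤ) : ℂ) * Complex.I * θ) := by
      intro θ
      simp only [f, ContinuousMap.coe_mk, mul_pow, ← Complex.exp_nat_mul]
      rw [show (((N i : ℤ) - N l : ℤ) : ℂ) * Complex.I * θ
        = N i * (θ * Complex.I) + -(N l) * θ * Complex.I by push_cast; ring, Complex.exp_add]
      ring
    simp_rw [hf]
    rw [intervalIntegral.integral_const_mul]
    split_ifs with h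
    · subst h
      simp; ring
    · have hne : ((((N i : ℤ) - N l : ℤ) : ℂ) * Complex.I) ≠ 0 := by
        refine mul_ne_zero ?_ Complex.I_ne_zero
        have : (N i : ℤ) - N l ≠ 0 := by
          have := hN.ne h
          omega
        exact_mod_cast this
      rw [integral_exp_mul_complex hne]
      have : Complex.exp ((((N i : ℤ) - N l : ℤ) : ℂ) * Complex.I * ((2 * Real.pi : ℝ) : ℂ)) = 1 := by
        rw [Complex.exp_eq_one_iff]
        exact ⟨(N i : ℤ) - N l, by push_cast; ring⟩
      rw [this]; simp
  simp_rw [hi] at hint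
  have heq := hint.unique (hasSum_ite_eq l (2 * Real.pi * (c l * r ^ N l)))
  have hle : ‖∫ θ in (0 : ℝ)..(2 * Real.pi), ∑' i, f i θ‖ ≤ B * |2 * Real.pi - 0| := by
    refine intervalIntegral.norm_integral_le_of_norm_le_const fun θ _ => ?_
    have h1 : ‖Complex.exp (-(N l) * θ * Complex.I)‖ = 1 := by
      have := Complex.norm_exp_ofReal_mul_I (-(N l) * θ)
      push_cast at this; exact this
    simp only [f, ContinuousMap.coe_mk]
    rw [tsum_mul_right, norm_mul, h1, mul_one]
    refine hB _ ?_
    rw [norm_mul, Complex.norm_exp_ofReal_mul_I, Complex.norm_real, Real.norm_eq_abs,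
      abs_of_nonneg hr, mul_one]
  have hpi := Real.pi_pos
  rw [heq, sub_zero, abs_of_pos (by positivity), norm_mul, norm_mul, norm_mul, norm_pow,
    Complex.norm_real, Complex.norm_real, Real.norm_eq_abs, Real.norm_eq_abs, abs_of_nonneg hr,
    abs_of_pos hpi, mul_comm B] at hle
  simp only [Complex.norm_ofNat] at hle
  exact le_of_mul_le_mul_left hle (by positivity)

/-- For `d` large, every point of the circle through `w₀` is moved close to `w₀` by some `d`-th root
of unity. -/
theorem exists_root_rotation {w₀ : ℂ} {ε : ℝ} (hε : 0 < ε) :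
    ∃ d : ℕ, 0 < d ∧ ∀ w : ℂ, ‖w‖ = ‖w₀‖ → ∃ ζ : ℂ, ζ ^ d = 1 ∧ ‖ζ * w - w₀‖ < ε := by
  have hπ := Real.pi_pos
  obtain ⟨d, hd⟩ := exists_nat_gt (‖w₀‖ * (2 * Real.pi) / ε)
  have hd0 : 0 < (d : ℝ) := lt_of_le_of_lt (by positivity) hd
  refine ⟨d, by exact_mod_cast hd0, fun w hw => ?_⟩
  rcases eq_or_ne w 0 with rfl | hw0
  · have : w₀ = 0 := norm_eq_zero.1 (by rw [← hw, norm_zero])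
    exact ⟨1, one_pow _, by simpa [this] using hε⟩
  have hwn : ‖w‖ ≠ 0 := norm_ne_zero_iff.2 hw0
  set α := Complex.arg (w₀ / w) with hα
  have hw₀ : w₀ = w * Complex.exp (α * Complex.I) := by
    have h1 := Complex.norm_mul_exp_arg_mul_I (w₀ / w)
    rw [norm_div, ← hw, div_self hwn, Complex.ofReal_one, one_mul] at h1
    rw [hα, h1, mul_div_cancel₀ _ hw0]
  -- `2πk/d` is the multiple of `2π/d` just below the angle `α` from `w` to `w₀`
  set k : ℤ := ⌊α * d / (2 * Real.pi)⌋ with hk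
  have hk1 : (k : ℝ) ≤ α * d / (2 * Real.pi) := Int.floor_le _
  have hk2 : α * d / (2 * Real.pi) < k + 1 := Int.lt_floor_add_one _
  rw [le_div_iff₀ (by positivity)] at hk1
  rw [div_lt_iff₀ (by positivity)] at hk2
  set β : ℝ := k * (2 * Real.pi) / d with hβ
  have hβd : β * d = k * (2 * Real.pi) := by rw [hβ]; field_simp
  have hdiff : |β - α| ≤ 2 * Real.pi / d := by
    rw [le_div_iff₀ hd0, ← abs_of_pos hd0, ← abs_mul, sub_mul, hβd, abs_le]
    constructor <;> linarith
  refine ⟨Complex.exp (β * Complex.I), ?_, ?_⟩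
  · rw [← Complex.exp_nat_mul, Complex.exp_eq_one_iff]
    refine ⟨k, ?_⟩
    have : (β : ℂ) * d = k * (2 * Real.pi) := by exact_mod_cast hβd
    linear_combination Complex.I * this
  · have e1 : Complex.exp (β * Complex.I) * w - w₀
        = w * Complex.exp (α * Complex.I) * (Complex.exp (Complex.I * ((β - α : ℝ) : ℂ)) - 1) := by
      rw [mul_sub, mul_assoc, ← Complex.exp_add, mul_one, ← hw₀, mul_comm]
      congr 3; push_cast; ring
    rw [e1, ← hw₀, norm_mul]
    have h2 := Real.norm_exp_I_mul_ofReal_sub_one_le (x := β - α)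
    rw [Real.norm_eq_abs] at h2
    calc _ ≤ ‖w₀‖ * (2 * Real.pi / d) :=
          mul_le_mul_of_nonneg_left (h2.trans hdiff) (norm_nonneg _)
      _ < ε := by
        rw [div_lt_iff₀ hε] at hd
        rw [← mul_div_assoc, div_lt_iff₀ hd0]; linarith

theorem isOpen_image {F : ℂ → ℂ} (hF : Differentiable ℂ F) (h0 : F 0 = 0) (hne : ∃ z, F z ≠ 0)
    {U : Set ℂ} (hU : IsOpen U) : IsOpen (F '' U) := by
  have han : AnalyticOnNhd ℂ F univ := fun z _ => hF.analyticAt z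
  rcases han.is_constant_or_isOpen isPreconnected_univ with ⟨w, hw⟩ | h
  · obtain ⟨z, hz⟩ := hne
    exact absurd ((hw z trivial).trans ((hw 0 trivial).symm.trans h0)) hz
  · exact h U (subset_univ _) hU

/-- Coefficient estimate at a small radius: `F` is open, so its image of the unit disc contains a
disc about `F 0 = 0`. -/
theorem coeff_small {F : ℂ → ℂ} (hF : Differentiable ℂ F) (h0 : F 0 = 0) (hne : ∃ z, F z ≠ 0)
    {N : ℕ → ℕ} (hN : Function.Injective N) :
    ∃ ρ : ℝ, 0 < ρ ∧ ∀ c, EntireCoeff N c → ∀ l, ‖c l‖ * ρ ^ N l ≤ pnorm 1 (lacSum F N c) := by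
  have ho := isOpen_image hF h0 hne (isOpen_ball (x := (0 : ℂ)) (ε := 1))
  obtain ⟨ρ, hρ, hsub⟩ := Metric.isOpen_iff.1 ho 0 ⟨0, by simp, h0⟩
  refine ⟨ρ / 2, by positivity, fun c hc l => ?_⟩
  refine coeff_le hN (by positivity) (hc _ (by positivity)) (fun w hw => ?_) l
  obtain ⟨z, hz, rfl⟩ := hsub (show w ∈ ball 0 ρ by
    rw [mem_ball_zero_iff, hw]; linarith)
  exact le_pnorm (differentiable_lacSum hF hc).continuous (mem_ball_zero_iff.1 hz).le

/-- Coefficient estimate at an arbitrary radius.  The image of a fixed disc under `F` need not contain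
a large circle, but the divisibility `d ∣ N l` makes a small disc about one point of that circle
suffice. -/
theorem coeff_big {F : ℂ → ℂ} (hF : Differentiable ℂ F) (h0 : F 0 = 0) (hne : ∃ z, F z ≠ 0)
    {N : ℕ → ℕ} (hN : Function.Injective N) (hd : ∀ d l, 0 < d → d ≤ l → d ∣ N l)
    {R : ℝ} (hR : 0 < R) :
    ∃ C : ℝ, 0 < C ∧ ∃ i : ℕ, 1 ≤ i ∧
      ∀ c, EntireCoeff N c → ∀ l, ‖c l‖ * R ^ N l ≤ C * pnorm i (lacSum F N c) := by
  obtain ⟨ρ, hρ, hsmall⟩ := coeff_small hF h0 hne hN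
  obtain ⟨z₀, hz₀⟩ : ∃ z₀, R < ‖F z₀‖ := by
    by_contra! hcon
    obtain ⟨z, hz⟩ := hne
    refine hz ?_
    rw [← h0]
    refine hF.apply_eq_apply_of_bounded ?_ z 0
    refine isBounded_iff_forall_norm_le.2 ⟨R, ?_⟩
    rintro _ ⟨y, rfl⟩
    exact hcon y
  -- the rotations by `d`-th roots of unity of `F '' ball z₀ 1` cover the circle through `F z₀`
  have ho := isOpen_image hF h0 hne (isOpen_ball (x := z₀) (ε := 1))
  obtain ⟨ε, hε, hsub⟩ := Metric.isOpen_iff.1 ho (F z₀) ⟨z₀, by simp, rfl⟩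
  obtain ⟨d, hd0, hrot⟩ := exists_root_rotation (w₀ := F z₀) hε
  set S : ℝ := ∑ l ∈ Finset.range d, (ρ ^ N l)⁻¹ * (‖F z₀‖ + ε) ^ N l with hS
  have hS0 : 0 ≤ S := Finset.sum_nonneg fun l _ => by positivity
  obtain ⟨i, hi⟩ := exists_nat_ge (‖z₀‖ + 1)
  have hi1 : (1 : ℝ) ≤ i := by linarith [norm_nonneg z₀]
  refine ⟨1 + S, by positivity, i, by exact_mod_cast hi1, fun c hc l => ?_⟩
  have hcont := (differentiable_lacSum hF hc).continuous
  set P := pnorm i (lacSum F N c)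
  have hP0 : 0 ≤ P := pnorm_nonneg _ _
  have hcl : ∀ l, ‖c l‖ ≤ (ρ ^ N l)⁻¹ * P := by
    intro l
    rw [inv_mul_eq_div, le_div_iff₀ (by positivity)]
    exact (hsmall c hc l).trans (pnorm_mono hi1 hcont)
  have hterm : ∀ l (x : ℝ), 0 ≤ x → x ≤ ‖F z₀‖ + ε →
      ‖c l‖ * x ^ N l ≤ (ρ ^ N l)⁻¹ * (‖F z₀‖ + ε) ^ N l * P := by
    intro l x hx hx'
    calc ‖c l‖ * x ^ N l ≤ ((ρ ^ N l)⁻¹ * P) * (‖F z₀‖ + ε) ^ N l := by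
          gcongr
          exact hcl l
      _ = _ := by ring
  rcases lt_or_ge l d with hl | hl
  · refine (hterm l R hR.le (by linarith)).trans ?_
    refine mul_le_mul_of_nonneg_right ?_ hP0
    have := Finset.single_le_sum (f := fun l => (ρ ^ N l)⁻¹ * (‖F z₀‖ + ε) ^ N l)
      (fun l _ => by positivity) (Finset.mem_range.2 hl)
    linarith
  -- the first `d` terms, not invariant under the rotations, are split off and bounded by `S * P`
  · let c' : ℕ → ℂ := fun l => if l < d then 0 else c l
    have hc' : EntireCoeff N c' := hc.of_le fun l => by
      simp only [c']; split_ifs <;> simp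
    have hbound : ∀ w : ℂ, ‖w‖ = ‖F z₀‖ → ‖∑' l, c' l * w ^ N l‖ ≤ (1 + S) * P := by
      intro w hw
      obtain ⟨ζ, hζ, hζw⟩ := hrot w hw
      have e1 : ∑' l, c' l * w ^ N l = ∑' l, c' l * (ζ * w) ^ N l := by
        refine tsum_congr fun l => ?_
        simp only [c']
        split_ifs with h
        · simp
        · obtain ⟨k, hk⟩ := hd d l hd0 (not_lt.1 h)
          rw [mul_pow, hk, pow_mul ζ, hζ, one_pow, one_mul]
      obtain ⟨z, hz, hzw⟩ := hsub (show ζ * w ∈ ball (F z₀) ε by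
        rw [mem_ball, dist_eq_norm]; exact hζw)
      have hzi : ‖z‖ ≤ i := by
        rw [mem_ball, dist_eq_norm] at hz
        have := norm_le_norm_add_norm_sub' z z₀
        linarith
      have e2 : ∑' l, c' l * (ζ * w) ^ N l
          = lacSum F N c z - ∑ l ∈ Finset.range d, c l * (ζ * w) ^ N l := by
        rw [eq_sub_iff_add_eq, lacSum, hzw]
        have hfin : ∑ l ∈ Finset.range d, c l * (ζ * w) ^ N l
            = ∑' l, if l < d then c l * (ζ * w) ^ N l else 0 := by
          rw [tsum_eq_sum (s := Finset.range d)]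
          · exact Finset.sum_congr rfl fun l hl => by rw [if_pos (Finset.mem_range.1 hl)]
          · intro l hl
            rw [if_neg (by simpa using hl)]
        rw [hfin, ← (hc'.summable _).tsum_add]
        · refine tsum_congr fun l => ?_
          simp only [c']; split_ifs <;> simp
        · refine summable_of_ne_finset_zero (s := Finset.range d) fun l hl => ?_
          rw [if_neg (by simpa using hl)]
      rw [e1, e2, add_mul, one_mul]
      refine (norm_sub_le _ _).trans (add_le_add (le_pnorm hcont hzi) ?_)
      refine (norm_sum_le _ _).trans ?_
      rw [hS, Finset.sum_mul]
      refine Finset.sum_le_sum fun l _ => ?_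
      rw [norm_mul, norm_pow]
      refine hterm l _ (norm_nonneg _) ?_
      have := norm_le_norm_add_norm_sub' (ζ * w) (F z₀)
      linarith
    have := coeff_le hN (norm_nonneg _) (hc' _ (norm_nonneg _)) hbound l
    simp only [c', if_neg (not_lt.2 hl)] at this
    refine le_trans ?_ this
    gcongr

/-! ### Properties of the spaces -/

/-- If `f k → g`, the coefficient estimate makes each coefficient of `f k` a Cauchy sequence, and the
limits are the coefficients of `g`. -/
theorem lacSpace_closed {F : ℂ → ℂ} (hF : Differentiable ℂ F) (h0 : F 0 = 0) (hne : ∃ z, F z ≠ 0)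
    {N : ℕ → ℕ} (hN : StrictMono N) (hd : ∀ d l, 0 < d → d ≤ l → d ∣ N l) (s : ℕ) :
    ClosedH (lacSpace F N s : Set (ℂ → ℂ)) := by
  intro f g hf hg hlim
  choose c hc hc0 hfc using hf
  have hfd : ∀ k, Differentiable ℂ (f k) := fun k => hfc k ▸ differentiable_lacSum hF (hc k)
  have hdiff : ∀ R : ℝ, 0 < R → ∃ C : ℝ, 0 < C ∧ ∃ i : ℕ, 1 ≤ i ∧ ∀ k k' l,
      ‖c k l - c k' l‖ * R ^ N l ≤ C * (pnorm i (f k - g) + pnorm i (f k' - g)) := by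
    intro R hR
    obtain ⟨C, hC, i, hi, h⟩ := coeff_big hF h0 hne hN.injective hd hR
    refine ⟨C, hC, i, hi, fun k k' l => ?_⟩
    refine (h (c k - c k') ((hc k).sub (hc k')) l).trans ?_
    refine mul_le_mul_of_nonneg_left ?_ hC.le
    rw [lacSum_sub F (hc k) (hc k'), ← hfc, ← hfc]
    refine pnorm_le (add_nonneg (pnorm_nonneg _ _) (pnorm_nonneg _ _)) fun z hz => ?_
    have h1 := le_pnorm ((hfd k).sub hg).continuous hz
    have h2 := le_pnorm ((hfd k').sub hg).continuous hz
    have h3 : (f k - f k') z = (f k - g) z - (f k' - g) z := by simp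
    rw [h3]
    exact (norm_sub_le _ _).trans (add_le_add h1 h2)
  have hcauchy : ∀ l, CauchySeq fun k => c k l := by
    intro l
    obtain ⟨C, hC, i, hi, h⟩ := hdiff 1 one_pos
    have ht := (hlim i hi).const_mul C
    rw [mul_zero] at ht
    refine Metric.cauchySeq_iff'.2 fun ε hε => ?_
    obtain ⟨K, hK⟩ := eventually_atTop.1 (ht.eventually_lt_const (half_pos hε))
    refine ⟨K, fun k hk => ?_⟩
    have h1 := h k K l
    rw [one_pow, mul_one] at h1
    rw [dist_eq_norm]
    linarith [hK k hk, hK K le_rfl]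
  choose c' hc' using fun l => cauchySeq_tendsto_of_complete (hcauchy l)
  have hdiff' : ∀ R : ℝ, 0 < R → ∃ C : ℝ, 0 < C ∧ ∃ i : ℕ, 1 ≤ i ∧ ∀ k l,
      ‖c k l - c' l‖ * R ^ N l ≤ C * pnorm i (f k - g) := by
    intro R hR
    obtain ⟨C, hC, i, hi, h⟩ := hdiff R hR
    refine ⟨C, hC, i, hi, fun k l => ?_⟩
    have t1 : Tendsto (fun k' => ‖c k l - c k' l‖ * R ^ N l) atTop
        (nhds (‖c k l - c' l‖ * R ^ N l)) := ((hc' l).const_sub (c k l)).norm.mul_const _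
    have t2 : Tendsto (fun k' => C * (pnorm i (f k - g) + pnorm i (f k' - g))) atTop
        (nhds (C * (pnorm i (f k - g) + 0))) := ((hlim i hi).const_add _).const_mul C
    have := le_of_tendsto_of_tendsto' t1 t2 fun k' => h k k' l
    rwa [add_zero] at this
  -- doubling the radius turns the uniform bound into a geometric one
  have hgeom : ∀ R : ℝ, 0 ≤ R → ∃ C : ℝ, 0 < C ∧ ∃ i : ℕ, 1 ≤ i ∧ ∀ k l,
      ‖c k l - c' l‖ * R ^ N l ≤ C * pnorm i (f k - g) * (1 / 2) ^ l := by
    intro R hR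
    obtain ⟨C, hC, i, hi, h⟩ := hdiff' (2 * (R + 1)) (by positivity)
    refine ⟨C, hC, i, hi, fun k l => ?_⟩
    have h1 := h k l
    have h2 : ((1 : ℝ) / 2) ^ N l ≤ (1 / 2) ^ l :=
      pow_le_pow_of_le_one (by norm_num) (by norm_num) (hN.id_le l)
    have h3 : R ^ N l ≤ (2 * (R + 1)) ^ N l * (1 / 2) ^ N l := by
      rw [← mul_pow]
      gcongr
      linarith
    calc ‖c k l - c' l‖ * R ^ N l ≤ ‖c k l - c' l‖ * ((2 * (R + 1)) ^ N l * (1 / 2) ^ N l) := by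
          gcongr
      _ = (‖c k l - c' l‖ * (2 * (R + 1)) ^ N l) * (1 / 2) ^ N l := by ring
      _ ≤ (C * pnorm i (f k - g)) * (1 / 2) ^ l := by
          refine mul_le_mul h1 h2 (by positivity) (mul_nonneg hC.le (pnorm_nonneg _ _))
  have hent : EntireCoeff N c' := by
    intro R hR
    obtain ⟨C, hC, i, hi, h⟩ := hgeom R hR
    refine ((hc 0 R hR).add (summable_geometric_two.mul_left (C * pnorm i (f 0 - g)))).of_nonneg_of_le
      (fun l => by positivity) fun l => ?_
    have h1 : ‖c' l‖ ≤ ‖c 0 l‖ + ‖c 0 l - c' l‖ := norm_le_norm_add_norm_sub _ _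
    calc ‖c' l‖ * R ^ N l ≤ (‖c 0 l‖ + ‖c 0 l - c' l‖) * R ^ N l := by gcongr
      _ ≤ _ := by rw [add_mul]; linarith [h 0 l]
  refine ⟨c', hent, fun l hl => ?_, ?_⟩
  · refine tendsto_nhds_unique (hc' l) ?_
    simp only [hc0 _ l hl]
    exact tendsto_const_nhds
  · ext z
    have t1 : Tendsto (fun k => f k z) atTop (nhds (g z)) := by
      obtain ⟨i, hi⟩ := exists_nat_ge (max 1 ‖z‖)
      have hi1 : 1 ≤ i := by exact_mod_cast (le_max_left _ _).trans hi
      refine tendsto_iff_norm_sub_tendsto_zero.2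
        (squeeze_zero (fun _ => norm_nonneg _) (fun k => ?_) (hlim i hi1))
      exact le_pnorm ((hfd k).sub hg).continuous ((le_max_right _ _).trans hi)
    have t2 : Tendsto (fun k => f k z) atTop (nhds (lacSum F N c' z)) := by
      obtain ⟨C, hC, i, hi, h⟩ := hgeom ‖F z‖ (norm_nonneg _)
      have ht := ((hlim i hi).const_mul C).mul_const 2
      rw [mul_zero, zero_mul] at ht
      refine tendsto_iff_norm_sub_tendsto_zero.2
        (squeeze_zero (fun _ => norm_nonneg _) (fun k => ?_) ht)
      have e : f k z - lacSum F N c' z = lacSum F N (c k - c') z := by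
        rw [lacSum_sub F (hc k) hent, ← hfc]; rfl
      rw [e]
      refine tsum_of_norm_bounded (hasSum_geometric_two.mul_left _) fun l => ?_
      rw [norm_mul, norm_pow]
      exact h k l
    exact tendsto_nhds_unique t1 t2

/-- The powers `F ^ N (l + s)` are linearly independent, by the coefficient estimate. -/
theorem lacSpace_infinite {F : ℂ → ℂ} (hF : Differentiable ℂ F) (h0 : F 0 = 0)
    (hne : ∃ z, F z ≠ 0) {N : ℕ → ℕ} (hN : Function.Injective N) (s : ℕ) :
    ¬ FiniteDimensional ℂ (lacSpace F N s) := by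
  intro hfin
  obtain ⟨ρ, hρ, hsmall⟩ := coeff_small hF h0 hne hN
  have hfinent : ∀ (T : Finset ℕ) (c : ℕ → ℂ), (∀ l ∉ T, c l = 0) → EntireCoeff N c :=
    fun T c h R _ => summable_of_ne_finset_zero (s := T) fun l hl => by simp [h l hl]
  let v : ℕ → lacSpace F N s := fun l => ⟨fun z => F z ^ N (l + s), by
    refine ⟨Pi.single (l + s) 1, hfinent {l + s} _ fun l' hl' => ?_, fun l' hl' => ?_, ?_⟩
    · exact Pi.single_eq_of_ne (by simpa using hl') _
    · exact Pi.single_eq_of_ne (by omega) _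
    · ext z
      rw [lacSum, tsum_eq_single (l + s)]
      · simp
      · intro l' hl'
        rw [Pi.single_eq_of_ne hl', zero_mul]⟩
  have hv : LinearIndependent ℂ v := by
    rw [linearIndependent_iff']
    intro T a hsum l hl
    let c : ℕ → ℂ := fun l => if s ≤ l ∧ l - s ∈ T then a (l - s) else 0
    have hc : EntireCoeff N c := hfinent (T.image (· + s)) c fun l hl => by
      simp only [c]
      rw [if_neg]
      rintro ⟨h1, h2⟩
      exact hl (Finset.mem_image.2 ⟨l - s, h2, by omega⟩)
    have hz : lacSum F N c = 0 := by
      ext z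
      have h1 : (∑ i ∈ T, a i • v i : lacSpace F N s).1 z = 0 := by rw [hsum]; rfl
      rw [lacSum, tsum_eq_sum (s := T.image (· + s)), Finset.sum_image (by simp)]
      · rw [Pi.zero_apply, ← h1]
        simp only [Submodule.coe_sum, Finset.sum_apply, Submodule.coe_smul, Pi.smul_apply,
          smul_eq_mul, v]
        refine Finset.sum_congr rfl fun i hi => ?_
        simp [c, hi]
      · intro l hl
        simp only [c]
        rw [if_neg, zero_mul]
        rintro ⟨h1, h2⟩
        exact hl (Finset.mem_image.2 ⟨l - s, h2, by omega⟩)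
    have h2 := hsmall c hc (l + s)
    rw [hz] at h2
    have h3 : pnorm 1 0 ≤ 0 := pnorm_le le_rfl fun z _ => by simp
    have h4 : c (l + s) = a l := by simp [c, hl]
    rw [h4] at h2
    have h5 : 0 < ρ ^ N (l + s) := by positivity
    have h6 : ‖a l‖ ≤ 0 := by
      by_contra! hpos
      have := mul_pos hpos h5
      linarith
    exact norm_le_zero_iff.1 h6
  exact not_finite_iff_infinite.2 inferInstance hv.finite

/-- Where `F` is bounded by `B`, the elements of the `s`-th space beat the factor
`(K s)! e^{b K s}`, since only powers `N l ≥ max (K s) (K s)!` occur in them. -/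
theorem lacSpace_estimate {F : ℂ → ℂ} (hF : Differentiable ℂ F) (h0 : F 0 = 0)
    (hne : ∃ z, F z ≠ 0) {N K : ℕ → ℕ} (hN : StrictMono N)
    (hd : ∀ d l, 0 < d → d ≤ l → d ∣ N l) (hK : Monotone K) (hKN : ∀ l, K l ≤ N l)
    (hKN' : ∀ l, (K l).factorial ≤ N l) {b B : ℝ} (hb : 0 ≤ b) (hB : 0 ≤ B) :
    ∃ C : ℝ, 0 < C ∧ ∃ i : ℕ, 1 ≤ i ∧ ∀ s, ∀ f ∈ lacSpace F N s, ∀ z, ‖F z‖ ≤ B →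
      (K s).factorial * Real.exp (b * K s) * ‖f z‖ ≤ C * pnorm i f := by
  obtain ⟨C, hC, i, hi, h⟩ := coeff_big hF h0 hne hN.injective hd
    -- the factor `e^(b + 2)` pays for `(K s)! ≤ e^(N l)`, for `e^(b N l)` and for summability
    (R := (B + 1) * Real.exp (b + 2)) (by positivity)
  have hsum : Summable fun l : ℕ => Real.exp (-(l : ℝ)) := Real.summable_exp_neg_nat
  have hpos : 0 < ∑' l : ℕ, Real.exp (-(l : ℝ)) := hsum.tsum_pos (fun _ => by positivity) 0 (by positivity)
  refine ⟨C * ∑' l : ℕ, Real.exp (-(l : ℝ)), by positivity, i, hi, ?_⟩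
  rintro s _ ⟨c, hc, hc0, rfl⟩ z hz
  set P := pnorm i (lacSum F N c) with hP
  have hP0 : 0 ≤ P := pnorm_nonneg _ _
  set A : ℝ := (K s).factorial * Real.exp (b * K s) with hA
  have hA0 : 0 ≤ A := by positivity
  have e1 : A * ‖lacSum F N c z‖ = ‖∑' l, (A : ℂ) * (c l * F z ^ N l)‖ := by
    rw [tsum_mul_left, norm_mul, Complex.norm_real, Real.norm_eq_abs, abs_of_nonneg hA0]
    rfl
  rw [e1, mul_right_comm]
  refine tsum_of_norm_bounded (hsum.hasSum.mul_left (C * P)) fun l => ?_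
  rw [norm_mul, norm_mul, norm_pow, Complex.norm_real, Real.norm_eq_abs, abs_of_nonneg hA0]
  rcases lt_or_ge l s with hl | hl
  · rw [hc0 l hl]; simp; positivity
  have h1 := h c hc l
  have h2 : A ≤ Real.exp (N l) * Real.exp (b * N l) := by
    refine mul_le_mul ?_ ?_ (by positivity) (by positivity)
    · have : ((K s).factorial : ℝ) ≤ N l := by
        exact_mod_cast (Nat.factorial_le (hK hl)).trans (hKN' l)
      linarith [Real.add_one_le_exp (N l : ℝ)]
    · have : (K s : ℝ) ≤ N l := by exact_mod_cast (hK hl).trans (hKN l)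
      gcongr
  have h3 : (B + 1) ^ N l = ((B + 1) * Real.exp (b + 2)) ^ N l *
      Real.exp (-((b + 2) * N l)) := by
    rw [mul_pow, ← Real.exp_nat_mul, mul_assoc, ← Real.exp_add]
    ring_nf; simp
  have h4 : Real.exp (-(N l : ℝ)) ≤ Real.exp (-(l : ℝ)) := by
    have : (l : ℝ) ≤ N l := by exact_mod_cast hN.id_le l
    gcongr
  calc A * (‖c l‖ * ‖F z‖ ^ N l) ≤
        (Real.exp (N l) * Real.exp (b * N l)) * (‖c l‖ * (B + 1) ^ N l) := by
          gcongr
          linarith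
    _ = (‖c l‖ * ((B + 1) * Real.exp (b + 2)) ^ N l) *
          (Real.exp (N l) * Real.exp (b * N l) * Real.exp (-((b + 2) * N l))) := by
        rw [h3]; ring
    _ = (‖c l‖ * ((B + 1) * Real.exp (b + 2)) ^ N l) * Real.exp (-(N l : ℝ)) := by
        rw [← Real.exp_add, ← Real.exp_add]; ring_nf
    _ ≤ C * P * Real.exp (-(l : ℝ)) := by
        refine mul_le_mul h1 h4 (by positivity) (by positivity)

/-! ### Translates, exponents and derivatives -/

theorem sin_mul_re_add_cos_mul_im_le (σ : ℝ) (z : ℂ) :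
    Real.sin σ * z.re + Real.cos σ * z.im ≤ ‖z‖ := by
  have h := Real.sin_sq_add_cos_sq σ
  have h1 : ‖z‖ ^ 2 = z.re ^ 2 + z.im ^ 2 := by
    rw [← Complex.normSq_eq_norm_sq, Complex.normSq_apply]; ring
  refine (abs_le_of_sq_le_sq' ?_ (norm_nonneg z)).2
  nlinarith [sq_nonneg (Real.sin σ * z.im - Real.cos σ * z.re)]

/-- A unit vector outside the arc points into one of the half-planes with `σ = 0` or `σ = π - θ`: if
`a = e^{iα}` with `0 < α < π`, then `θ ≤ α`, so `sin (α - θ) ≥ 0`. -/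
theorem OutsideArc.halfPlane {θ : ℝ} (hθ : 0 < θ) {a : ℂ} (ha : ‖a‖ = 1) (h : OutsideArc θ a) :
    a.im ≤ 0 ∨ Real.sin (Real.pi - θ) * a.re + Real.cos (Real.pi - θ) * a.im ≤ 0 := by
  rcases le_or_gt a.im 0 with him | him
  · exact Or.inl him
  refine Or.inr ?_
  have hexp : a = Complex.exp (a.arg * Complex.I) := by
    have := Complex.norm_mul_exp_arg_mul_I a
    rw [ha, Complex.ofReal_one, one_mul] at this
    exact this.symm
  have h0 : 0 ≤ a.arg := Complex.arg_nonneg_iff.2 him.le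
  have hle : θ ≤ a.arg := by
    by_contra! hlt
    exact h a.arg (by linarith) hlt hexp
  have hre : a.re = Real.cos a.arg := by
    conv_lhs => rw [hexp]
    exact Complex.exp_ofReal_mul_I_re _
  have him' : a.im = Real.sin a.arg := by
    conv_lhs => rw [hexp]
    exact Complex.exp_ofReal_mul_I_im _
  have hs : 0 ≤ Real.sin (a.arg - θ) :=
    Real.sin_nonneg_of_nonneg_of_le_pi (by linarith) (by linarith [Complex.arg_le_pi a])
  rw [Real.sin_sub] at hs
  rw [hre, him', Real.sin_pi_sub, Real.cos_pi_sub]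
  linarith

/-- A single bound for `F` on the disc of radius `J + 1` and on all translates of the disc of radius
`J` by natural multiples of `1` or of a unit vector outside the arc.  Such translations do not
increase the linear form that defines the half-plane. -/
theorem bounded_on_translates {F : ℂ → ℂ} (hF : Differentiable ℂ F)
    (hbd : ∀ σ : ℝ, 0 ≤ σ → σ < Real.pi → ∀ J : ℝ, ∃ B : ℝ, ∀ z : ℂ,
      Real.sin σ * z.re + Real.cos σ * z.im ≤ J → ‖F z‖ ≤ B)
    {θ : ℝ} (hθ : 0 < θ) (hθ' : θ < Real.pi) (J : ℝ) :
    ∃ B : ℝ, 0 ≤ B ∧ (∀ z, ‖z‖ ≤ J + 1 → ‖F z‖ ≤ B) ∧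
      (∀ z, ‖z‖ ≤ J → ∀ k : ℕ, ‖F (z + k)‖ ≤ B) ∧
      ∀ a : ℂ, ‖a‖ = 1 → OutsideArc θ a → ∀ z, ‖z‖ ≤ J → ∀ k : ℕ, ‖F (z + k * a)‖ ≤ B := by
  obtain ⟨B₁, h₁⟩ := hbd 0 le_rfl Real.pi_pos J
  obtain ⟨B₂, h₂⟩ := hbd (Real.pi - θ) (by linarith) (by linarith) J
  have hB₁ : B₁ ≤ max (pnorm (J + 1) F) (max B₁ B₂) := (le_max_left _ _).trans (le_max_right _ _)
  have hB₂ : B₂ ≤ max (pnorm (J + 1) F) (max B₁ B₂) := (le_max_right _ _).trans (le_max_right _ _)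
  refine ⟨max (pnorm (J + 1) F) (max B₁ B₂), (pnorm_nonneg _ _).trans (le_max_left _ _),
    fun z hz => (le_pnorm hF.continuous hz).trans (le_max_left _ _), fun z hz k => ?_,
    fun a ha haθ z hz k => ?_⟩
  · refine (h₁ _ ?_).trans hB₁
    have := sin_mul_re_add_cos_mul_im_le 0 z
    simp at this ⊢
    linarith
  · have hk : (0 : ℝ) ≤ k := k.cast_nonneg
    rcases haθ.halfPlane hθ ha with h | h
    · refine (h₁ _ ?_).trans hB₁
      have := sin_mul_re_add_cos_mul_im_le 0 z
      simp at this ⊢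
      nlinarith
    · refine (h₂ _ ?_).trans hB₂
      have h3 := sin_mul_re_add_cos_mul_im_le (Real.pi - θ) z
      have h4 := mul_nonpos_of_nonneg_of_nonpos hk h
      simp only [Complex.add_re, Complex.add_im, Complex.mul_re, Complex.mul_im,
        Complex.natCast_re, Complex.natCast_im, zero_mul, sub_zero, add_zero]
      linarith

/-- The factor `l!` in `N l` provides the divisibility, the other factor the growth. -/
theorem exists_exponents (K : ℕ → ℕ) (hK : Monotone K) :
    ∃ N : ℕ → ℕ, StrictMono N ∧ (∀ d l, 0 < d → d ≤ l → d ∣ N l) ∧ (∀ l, K l ≤ N l) ∧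
      ∀ l, (K l).factorial ≤ N l := by
  have hle : ∀ l, l + K l + (K l).factorial
      ≤ l.factorial * (l + K l + (K l).factorial) := fun l =>
    Nat.le_mul_of_pos_left _ l.factorial_pos
  refine ⟨fun l => l.factorial * (l + K l + (K l).factorial), ?_, ?_, ?_, ?_⟩
  · refine strictMono_nat_of_lt_succ fun l => ?_
    have h1 : l.factorial ≤ (l + 1).factorial := Nat.factorial_le l.le_succ
    have h2 := hK l.le_succ
    have h3 : (K l).factorial ≤ (K (l + 1)).factorial := Nat.factorial_le h2
    refine Nat.mul_lt_mul_of_le_of_lt h1 ?_ (l + 1).factorial_pos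
    rw [Nat.succ_eq_add_one] at h2
    omega
  · exact fun d l hd hdl => (Nat.dvd_factorial hd hdl).mul_right _
  · intro l; have := hle l; dsimp only; omega
  · intro l; have := hle l; dsimp only; omega

theorem exists_majorant (u : ℕ → ℕ) : ∃ K : ℕ → ℕ, Monotone K ∧ ∀ s, u s ≤ K s :=
  ⟨fun l => ∑ s ∈ Finset.range (l + 1), u s,
    fun _ _ h => Finset.sum_le_sum_of_subset (Finset.range_mono (by omega)),
    fun s => Finset.single_le_sum (fun _ _ => Nat.zero_le _) (Finset.mem_range.2 s.lt_succ_self)⟩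

/-- Cauchy's inequality on the unit circle about `z`. -/
theorem norm_deriv_iterate_le {x : ℂ → ℂ} (hx : Differentiable ℂ x) {z : ℂ} {A : ℝ}
    (hA : ∀ w, ‖w‖ ≤ ‖z‖ + 1 → ‖x w‖ ≤ A) (k : ℕ) :
    ‖deriv^[k] x z‖ ≤ k.factorial * A := by
  rw [← iteratedDeriv_eq_iterate]
  have := Complex.norm_iteratedDeriv_le_of_forall_mem_sphere_norm_le (f := x) (c := z) k one_pos
    (C := A) hx.diffContOnCl fun w hw => hA w ?_
  · simpa using this
  · rw [mem_sphere, dist_eq_norm] at hw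
    have := norm_le_norm_add_norm_sub' w z
    linarith

/-- Proposition 3.6: given `φ`-increasing sequences `(n_k)`, `(m_k)`, `(t_k)`, there exist
strictly increasing sequences `(k_{1,s})`, `(k_{2,s})` and a non-increasing sequence
`(M_s)` of closed infinite-dimensional subspaces of `H(ℂ)` such that for every `b > 0`,
`θ ∈ (0,π)` and `j ≥ 1` there is a continuous seminorm `q` on `H(ℂ)` dominating
`p_j(e^{bk}D^k x)`, `p_j(e^{bk}T_a^k x)` and `p_j(e^{bk}T_1^k x)` on `M_s` for the
relevant ranges of `k`. -/
theorem stmt_9 (φ : ℕ → ℕ) (n m t : ℕ → ℕ)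
    (hn : PhiIncreasing φ n) (hm : PhiIncreasing φ m) (ht : PhiIncreasing φ t) :
    ∃ (k1 k2 : ℕ → ℕ) (M : ℕ → Submodule ℂ (ℂ → ℂ)),
      StrictMono k1 ∧ StrictMono k2 ∧ (∀ s, 1 ≤ k1 s) ∧ (∀ s, 1 ≤ k2 s) ∧
      (∀ s, 1 ≤ s → IsClosedInfDimSubspaceH (M s)) ∧
      (∀ s, 1 ≤ s → M (s + 1) ≤ M s) ∧
      ∀ b : ℝ, 0 < b → ∀ θ : ℝ, 0 < θ → θ < Real.pi → ∀ j : ℕ, 1 ≤ j →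
        ∃ q : (ℂ → ℂ) → ℝ, IsContinuousSeminormH q ∧
          ∀ a : ℂ, ‖a‖ = 1 → OutsideArc θ a →
            ∀ s : ℕ, 1 ≤ s → ∀ x : ℂ → ℂ, x ∈ M s →
              (∀ k : ℕ, n s ≤ k → k ≤ n s + φ (n s) →
                pnorm j (fun z => (Real.exp (b * k) : ℂ) * (deriv^[k] x) z) ≤ q x) ∧
              (∀ k : ℕ, m (k1 s) ≤ k → k ≤ m (k1 s) + φ (m (k1 s)) →
                pnorm j (fun z => (Real.exp (b * k) : ℂ) * x (z + (k : ℂ) * a)) ≤ q x) ∧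
              (∀ k : ℕ, t (k2 s) ≤ k → k ≤ t (k2 s) + φ (t (k2 s)) →
                pnorm j (fun z => (Real.exp (b * k) : ℂ) * x (z + (k : ℂ))) ≤ q x) := by
  obtain ⟨F, hF, h0, hne, hbd⟩ := exists_entire
  -- `K s` dominates all indices `k` used at stage `s`, with `k1 s = k2 s = s + 1`
  obtain ⟨K, hK, hKu⟩ := exists_majorant fun s =>
    (n s + φ (n s)) + (m (s + 1) + φ (m (s + 1))) + (t (s + 1) + φ (t (s + 1)))
  obtain ⟨N, hN, hd, hKN, hKN'⟩ := exists_exponents K hK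
  refine ⟨fun s => s + 1, fun s => s + 1, lacSpace F N, strictMono_id.add_const 1,
    strictMono_id.add_const 1, fun s => s.succ_pos, fun s => s.succ_pos, fun s _ => ⟨?_,
      lacSpace_closed hF h0 hne hN hd s, lacSpace_infinite hF h0 hne hN.injective s⟩,
    fun s _ => lacSpace_anti F N s.le_succ, ?_⟩
  · rintro _ ⟨c, hc, -, rfl⟩
    exact differentiable_lacSum hF hc
  intro b hb θ hθ hθ' j _
  obtain ⟨B, hB0, hBball, hBone, hBarc⟩ := bounded_on_translates hF hbd hθ hθ' j
  obtain ⟨C, hC, i, hi, hest⟩ := lacSpace_estimate hF h0 hne hN hd hK hKN hKN' hb.le hB0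
  refine ⟨fun f => C * pnorm i f, isContinuousSeminormH_mul_pnorm hC hi, ?_⟩
  intro a ha haθ s _ x hx
  have hxd : Differentiable ℂ x := by
    obtain ⟨c, hc, -, rfl⟩ := hx
    exact differentiable_lacSum hF hc
  have hq : 0 ≤ C * pnorm i x := mul_nonneg hC.le (pnorm_nonneg _ _)
  have hKs := hKu s
  have hexp : ∀ k : ℕ, k ≤ K s → Real.exp (b * k) ≤ Real.exp (b * K s) := fun k hk => by
    have : (k : ℝ) ≤ K s := by exact_mod_cast hk
    gcongr
  have hnorm : ∀ (k : ℕ) (w : ℂ), ‖(Real.exp (b * k) : ℂ) * w‖ = Real.exp (b * k) * ‖w‖ := by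
    intro k w
    rw [norm_mul, Complex.norm_real, Real.norm_eq_abs, Real.abs_exp]
  have htrans : ∀ (k : ℕ) (w : ℂ), k ≤ K s → ‖F w‖ ≤ B →
      ‖(Real.exp (b * k) : ℂ) * x w‖ ≤ C * pnorm i x := by
    intro k w hk hw
    rw [hnorm]
    refine le_trans ?_ (hest s x hx w hw)
    have h1 : (1 : ℝ) ≤ (K s).factorial := by exact_mod_cast (K s).factorial_pos
    refine mul_le_mul_of_nonneg_right ?_ (norm_nonneg _)
    exact (hexp k hk).trans (le_mul_of_one_le_left (Real.exp_pos _).le h1)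
  dsimp only at hKs ⊢
  refine ⟨fun k _ hk => pnorm_le hq fun z hz => ?_, fun k _ hk => pnorm_le hq fun z hz => ?_,
    fun k _ hk => pnorm_le hq fun z hz => ?_⟩
  -- in Cauchy's inequality the factor `k!` is absorbed by the `(K s)!` of `lacSpace_estimate`
  · have hkK : k ≤ K s := by omega
    have hcauchy := norm_deriv_iterate_le hxd (z := z)
      (A := C * pnorm i x / ((K s).factorial * Real.exp (b * K s))) (fun w hw => by
        rw [le_div_iff₀ (by positivity), mul_comm]
        exact hest s x hx w (hBball w (hw.trans (by linarith)))) k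
    rw [hnorm]
    have h1 : (k.factorial : ℝ) ≤ (K s).factorial := by exact_mod_cast Nat.factorial_le hkK
    calc _ ≤ Real.exp (b * K s) * ((K s).factorial *
          (C * pnorm i x / ((K s).factorial * Real.exp (b * K s)))) := by
          refine mul_le_mul (hexp k hkK) (hcauchy.trans ?_) (norm_nonneg _) (Real.exp_pos _).le
          gcongr
      _ = C * pnorm i x := by field_simp
  · exact htrans k _ (by omega) (hBarc a ha haθ z hz k)
  · exact htrans k _ (by omega) (hBone z hz k)
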